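/- arXiv:1211.6630 — 2 statements merged into one kernel-verified Lean document; each statement's English description precedes it below -/
import Mathlib

section
/- Let n ≥ 5 and let σ be a permutation of {1,…,n} with m_1 fixed points and m_2 orbits of size 2. Then the number of pairs (α,β) of permutations of {1,…,n} with α of cycle type (n), β of cycle type (n−3,1,1,1), and α·β = σ, equals (1 − ε(σ)) · (n−4)! · ((n − m_1)(n − m_1 − 1) − 2·m_2)/6. -/
/-!
Writing `γ = β⁻¹`, the pairs `(α, β)` correspond to the `(n-3)`-cycles `γ` such that `σ * γ` is an
`n`-cycle. The basic operation is bypassing: for a full cycle `γ` of a set `S` and `p ∈ S`,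
`swap p (γ p) * γ` fixes `p` and is a full cycle of `S \ {p}`; conversely `γ` is recovered from it by
inserting `p` before `γ p` (`cyc_iff`). If `γ` fixes `p`, then `σ * γ` is a full cycle of `S` exactly when `σ p ≠ p` and
`σ' * γ` is a full cycle of `S \ {p}`, where `σ' = swap p (σ p) * σ` (`cycCount_bypass`).

Let `N_k(σ)` be the number of ways to choose `k` distinct points of an `n`-set in order, together
with a cycle `γ` through all the other points such that `σ * γ` is a full cycle. Bypassing the
first chosen point gives `N_k(σ) = ∑ N_{k-1}(swap x (σ x) * σ)`, the sum being over the points `x`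
moved by `σ`, and the new permutation lives on `n-1` points and has the opposite sign.

The key fact is that `N_1(σ) = 2 (n-2)!` for every odd `σ` (`sum_cycCount_erase`), by induction on
`n`. Fix `p` moved by `σ` and put `q₀ = σ⁻¹ p`. If the fixed point `x` of `γ` is not `p`, bypassing
`p` in both `γ` and `σ * γ` reduces to `n-1` points, with the product replaced by
`σ * swap q₀ q * swap p q`, where `q = γ p` is different from `q₀` and `x`. If `x = p`, then
removing from the cycle `γ` the predecessor `q` of `q₀` gives precisely the missing terms `q = x`.
Each of the `n-2` values `q ∉ {p, q₀}` contributes `2 (n-3)!` by induction.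

Hence `N_2(σ) = 2 (n-3)! s` for even `σ` with `s = n - m₁` moved points. For odd `σ`, bypassing `x`
leaves `s-2` moved points if `x` lies on a `2`-cycle and `s-1` otherwise, so that
`N_3(σ) = 2 (n-4)! (s(s-1) - 2 m₂)`. Each `(n-3)`-cycle is counted `3! = 6` times in `N_3`.
For even `σ` there are no pairs, by signs.
-/

/-- The multiset of orbit sizes of a permutation of `Fin n`
(fixed points contribute parts equal to `1`). -/
def fullCycleType {n : ℕ} (σ : Equiv.Perm (Fin n)) : Multiset ℕ :=
  σ.cycleType + Multiset.replicate (n - σ.cycleType.sum) 1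

open Equiv Equiv.Perm Finset


/-- `Cyc S γ`: the permutation `γ` permutes `S` in a single cycle and fixes every point outside
`S`. When `S` has at most one element this means `γ = 1`. -/
def Cyc {α : Type*} (S : Finset α) (γ : Perm α) : Prop :=
  γ.IsCycleOn (S : Set α) ∧ ∀ x, x ∉ S → γ x = x

/-! ### Bypassing a point of a cycle -/

theorem mem_of_fix {α : Type*} {S : Finset α} {σ : Perm α} (hσ : ∀ x, x ∉ S → σ x = x) {x : α}
    (hx : x ∈ S) : σ x ∈ S := by
  by_contra h
  exact h ((σ.injective (hσ _ h)).symm ▸ hx)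

section
variable {α : Type*} [DecidableEq α]

theorem Cyc.insert_point {S : Finset α} {p q : α} {δ : Perm α} (hp : p ∉ S) (hq : q ∈ S)
    (h : Cyc S δ) : Cyc (insert p S) (swap p q * δ) := by
  obtain ⟨h1, h2⟩ := h
  have hpq : p ≠ q := fun e => hp (e ▸ hq)
  have hout : ∀ x, x ∉ insert p S → (swap p q * δ) x = x := by
    intro x hx
    simp only [Finset.mem_insert, not_or] at hx
    rw [Perm.mul_apply, h2 x hx.2, swap_apply_of_ne_of_ne hx.1]
    rintro rfl; exact hx.2 hq
  have hδp : δ p = p := h2 p hp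
  have hmem : ∀ x, δ x ∈ S ↔ x ∈ S := fun x => h1.apply_mem_iff
  have hgp : (swap p q * δ) p = q := by simp [hδp]
  have hstep : ∀ y ∈ S, SameCycle (swap p q * δ) y (δ y) := by
    intro y hy
    have hyp : δ y ≠ p := fun e => hp (e ▸ (hmem y).2 hy)
    by_cases hyq : δ y = q
    · refine ⟨2, ?_⟩
      have h1 : (swap p q * δ) y = p := by simp [hyq]
      rw [show (2 : ℤ) = ((2 : ℕ) : ℤ) from rfl, zpow_natCast, pow_two, Perm.mul_apply, h1, hgp,
        hyq]
    · refine ⟨1, ?_⟩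
      rw [zpow_one, Perm.mul_apply, swap_apply_of_ne_of_ne hyp hyq]
  have hpow : ∀ y ∈ S, ∀ k : ℕ, (δ ^ k) y ∈ S ∧ SameCycle (swap p q * δ) y ((δ ^ k) y) := by
    intro y hy k
    induction k with
    | zero => simpa using ⟨hy, SameCycle.refl _ _⟩
    | succ k ih =>
      rw [pow_succ', Perm.mul_apply]
      exact ⟨(hmem _).2 ih.1, ih.2.trans (hstep _ ih.1)⟩
  have hS : ∀ y ∈ S, SameCycle (swap p q * δ) q y := by
    intro y hy
    obtain ⟨k, -, hk⟩ := h1.exists_pow_eq hq hy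
    exact hk ▸ (hpow q hq k).2
  have hall : ∀ y ∈ insert p S, SameCycle (swap p q * δ) q y := by
    intro y hy
    rcases Finset.mem_insert.1 hy with rfl | hy
    · exact SameCycle.symm ⟨1, by rw [zpow_one, hgp]⟩
    · exact hS y hy
  refine ⟨⟨?_, fun x hx y hy => (hall x hx).symm.trans (hall y hy)⟩, hout⟩
  have hinj := (swap p q * δ).injective
  have hmaps : Set.MapsTo (swap p q * δ) (insert p S : Finset α) (insert p S : Finset α) := by
    intro x hx
    by_contra hc
    have := hout _ hc
    have := hinj this
    rw [this] at hc
    exact hc hx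
  exact ((insert p S).finite_toSet.injOn_iff_bijOn_of_mapsTo hmaps).1 hinj.injOn

theorem Cyc.erase_point {S : Finset α} {p : α} {γ : Perm α} (hp : p ∈ S)
    (hS : (S.erase p).Nonempty) (h : Cyc S γ) :
    γ p ≠ p ∧ Cyc (S.erase p) (swap p (γ p) * γ) := by
  obtain ⟨h1, h2⟩ := h
  have hne : γ p ≠ p := by
    apply h1.apply_ne _ hp
    obtain ⟨y, hy⟩ := hS
    exact ⟨p, hp, y, Finset.mem_of_mem_erase hy, (Finset.ne_of_mem_erase hy).symm⟩
  have hmem : ∀ x, γ x ∈ S ↔ x ∈ S := fun x => h1.apply_mem_iff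
  set δ := swap p (γ p) * γ with hδ
  have hδ1 : ∀ z, γ z = p → δ z = γ p := fun z hz => by simp [hδ, hz]
  have hδ2 : ∀ z, z ≠ p → γ z ≠ p → δ z = γ z := fun z hz hz' => by
    rw [hδ, Perm.mul_apply, swap_apply_of_ne_of_ne hz' (fun e => hz (γ.injective e))]
  have hδp : δ p = p := by simp [hδ]
  have hout : ∀ x, x ∉ S.erase p → δ x = x := by
    intro x hx
    by_cases hxp : x = p
    · rw [hxp, hδp]
    · have hxS : x ∉ S := fun hh => hx (Finset.mem_erase.2 ⟨hxp, hh⟩)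
      rw [hδ2 x hxp (by rw [h2 x hxS]; exact hxp), h2 x hxS]
  -- a `γ`-orbit is followed by `δ`, with `p` replaced by its successor
  have hpow : ∀ x, x ≠ p → ∀ k : ℕ,
      SameCycle δ x (if (γ ^ k) x = p then γ p else (γ ^ k) x) := by
    intro x hx k
    induction k with
    | zero => simp [hx, SameCycle.refl]
    | succ k ih =>
      rw [pow_succ', Perm.mul_apply]
      generalize (γ ^ k) x = z at ih ⊢
      by_cases hz : z = p
      · subst hz; simpa [hne] using ih
      · rw [if_neg hz] at ih
        by_cases hz' : γ z = p
        · rw [if_pos hz']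
          exact ih.trans ⟨1, by rw [zpow_one, hδ1 z hz']⟩
        · rw [if_neg hz']
          exact ih.trans ⟨1, by rw [zpow_one, hδ2 z hz hz']⟩
  refine ⟨hne, ⟨?_, ?_⟩, hout⟩
  · have hinj := δ.injective
    have hmaps : Set.MapsTo δ (S.erase p : Finset α) (S.erase p : Finset α) := by
      intro x hx
      by_contra hc
      have := hout _ hc
      have := hinj this
      rw [this] at hc
      exact hc hx
    exact ((S.erase p).finite_toSet.injOn_iff_bijOn_of_mapsTo hmaps).1 hinj.injOn
  · intro x hx y hy
    obtain ⟨k, -, hk⟩ := h1.exists_pow_eq (Finset.mem_of_mem_erase hx) (Finset.mem_of_mem_erase hy)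
    have := hpow x (Finset.ne_of_mem_erase hx) k
    rwa [hk, if_neg (Finset.ne_of_mem_erase hy)] at this

theorem cyc_iff {S : Finset α} {p : α} {γ : Perm α} (hp : p ∈ S) (hγ : γ p ∈ S)
    (hS : (S.erase p).Nonempty) :
    Cyc S γ ↔ γ p ≠ p ∧ Cyc (S.erase p) (swap p (γ p) * γ) := by
  refine ⟨fun h => h.erase_point hp hS, fun ⟨h1, h2⟩ => ?_⟩
  have := h2.insert_point (Finset.notMem_erase p S) (Finset.mem_erase.2 ⟨h1, hγ⟩)
  rwa [Finset.insert_erase hp, ← mul_assoc, swap_mul_self, one_mul] at this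

theorem nontrivial_of_mem {T : Finset α} {x y : α} (hx : x ∈ T) (hy : y ∈ T.erase x) :
    (T : Set α).Nontrivial :=
  ⟨x, hx, y, Finset.mem_of_mem_erase hy, (Finset.ne_of_mem_erase hy).symm⟩

theorem swap_mul_swap_aux {p q x : α} (h1 : q ≠ p) (h2 : x ≠ p) (h3 : x ≠ q) :
    swap q p * swap x q = swap q x * swap p x := by
  ext z
  simp only [Perm.mul_apply, swap_apply_def]
  grind

theorem bypass_fix {S : Finset α} {σ : Perm α} (hσ : ∀ x, x ∉ S → σ x = x) {p : α} (hp : p ∈ S) :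
    ∀ x, x ∉ S.erase p → (swap p (σ p) * σ) x = x := by
  intro x hx
  by_cases hxp : x = p
  · simp [hxp]
  · have hxS : x ∉ S := fun h => hx (Finset.mem_erase.2 ⟨hxp, h⟩)
    rw [Perm.mul_apply, hσ x hxS, swap_apply_of_ne_of_ne hxp]
    rintro rfl
    exact hxS (mem_of_fix hσ hp)

end

/-! ### Products of a full cycle and a cycle missing one point -/

section
variable {α : Type*} [DecidableEq α] [Fintype α]

open Classical in
/-- The number of permutations `γ` cycling through `T` such that `σ * γ` cycles through `S`. -/
noncomputable def cycCount (S T : Finset α) (σ : Perm α) : ℕ :=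
  #{γ : Perm α | Cyc T γ ∧ Cyc S (σ * γ)}

/-- If `p ∉ T`, the cycles `γ` of `T` fix `p`, so `p` can be bypassed in `σ * γ` by changing `σ`
alone. -/
theorem cycCount_bypass {S T : Finset α} {σ : Perm α} (hσ : ∀ x, x ∉ S → σ x = x) {p : α}
    (hp : p ∈ S) (hpT : p ∉ T) (hS : (S.erase p).Nonempty) :
    cycCount S T σ = if σ p = p then 0 else cycCount (S.erase p) T (swap p (σ p) * σ) := by
  have key : ∀ γ : Perm α, Cyc T γ →
      (Cyc S (σ * γ) ↔ σ p ≠ p ∧ Cyc (S.erase p) (swap p (σ p) * σ * γ)) := by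
    intro γ hγ
    have hγp : (σ * γ) p = σ p := by rw [Perm.mul_apply, hγ.2 p hpT]
    rw [cyc_iff hp (by rw [hγp]; exact mem_of_fix hσ hp) hS, hγp, mul_assoc]
  classical
  unfold cycCount
  split_ifs with h
  · rw [Finset.card_eq_zero, Finset.filter_eq_empty_iff]
    rintro γ - ⟨h1, h2⟩
    exact ((key γ h1).1 h2).1 h
  · congr 1
    ext γ
    simp only [Finset.mem_filter, Finset.mem_univ, true_and]
    exact and_congr_right fun h1 => by rw [key γ h1]; simp [h]

open Classical in
/-- Prescribing `γ x = q` amounts to removing `x` from the cycle `γ`. -/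
theorem cycCount_fiber {S T : Finset α} {σ : Perm α} {x q : α} (hx : x ∈ T)
    (hq : q ∈ T.erase x) :
    #{γ ∈ ({γ : Perm α | Cyc T γ ∧ Cyc S (σ * γ)} : Finset (Perm α)) | γ x = q} =
      cycCount S (T.erase x) (σ * swap x q) := by
  unfold cycCount
  refine Finset.card_bij' (fun γ _ => swap x q * γ) (fun γ _ => swap x q * γ) ?_ ?_ ?_ ?_
  · intro γ hγ
    simp only [Finset.mem_filter, Finset.mem_univ, true_and] at hγ ⊢
    obtain ⟨⟨h1, h2⟩, h3⟩ := hγ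
    refine ⟨?_, by simpa [mul_assoc] using h2⟩
    rw [← h3]
    exact (h1.erase_point hx ⟨q, hq⟩).2
  · intro γ hγ
    simp only [Finset.mem_filter, Finset.mem_univ, true_and] at hγ ⊢
    obtain ⟨h1, h2⟩ := hγ
    refine ⟨⟨?_, by simpa [mul_assoc] using h2⟩, ?_⟩
    · have := h1.insert_point (Finset.notMem_erase x T) hq
      rwa [Finset.insert_erase hx] at this
    · rw [Perm.mul_apply, h1.2 x (Finset.notMem_erase x T), swap_apply_left]
  · intro γ _; simp [← mul_assoc]
  · intro γ _; simp [← mul_assoc]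

/-- Sorting the cycles `γ` of `T` by the successor `q` of `p`, and bypassing `p` in `γ`. -/
theorem cycCount_split_image {S T : Finset α} {σ : Perm α} {p : α} (hp : p ∈ T)
    (hT : (T.erase p).Nonempty) :
    cycCount S T σ = ∑ q ∈ T.erase p, cycCount S (T.erase p) (σ * swap p q) := by
  classical
  obtain ⟨y, hy⟩ := hT
  rw [cycCount, Finset.card_eq_sum_card_fiberwise (f := fun γ : Perm α => γ p) (t := T.erase p)]
  · exact Finset.sum_congr rfl fun q hq => cycCount_fiber hp hq
  · intro γ hγ
    simp only [Finset.coe_filter, Finset.mem_univ, true_and, Set.mem_ofPred_eq] at hγ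
    exact Finset.mem_erase.2 ⟨hγ.1.1.apply_ne (nontrivial_of_mem hp hy) hp,
      hγ.1.1.apply_mem_iff.2 hp⟩

/-- Sorting the cycles `γ` of `T` by the predecessor `x` of `q`, and bypassing `x` in `γ`. -/
theorem cycCount_split_preimage {S T : Finset α} {σ : Perm α} {q : α} (hq : q ∈ T)
    (hT : (T.erase q).Nonempty) :
    cycCount S T σ = ∑ x ∈ T.erase q, cycCount S (T.erase x) (σ * swap x q) := by
  classical
  obtain ⟨y, hy⟩ := hT
  rw [cycCount, Finset.card_eq_sum_card_fiberwise (f := fun γ : Perm α => γ⁻¹ q)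
    (t := T.erase q)]
  · refine Finset.sum_congr rfl fun x hx => ?_
    rw [← cycCount_fiber (Finset.mem_of_mem_erase hx)
      (Finset.mem_erase.2 ⟨(Finset.ne_of_mem_erase hx).symm, hq⟩)]
    congr 1
    ext γ
    simp only [Finset.mem_filter]
    rw [inv_eq_iff_eq, eq_comm (a := q)]
  · intro γ hγ
    simp only [Finset.coe_filter, Finset.mem_univ, true_and, Set.mem_ofPred_eq] at hγ
    have hm : γ⁻¹ q ∈ T := by
      have := hγ.1.1.apply_mem_iff (x := γ⁻¹ q)
      simpa [hq] using this
    refine Finset.mem_erase.2 ⟨fun h => ?_, hm⟩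
    rw [inv_eq_iff_eq] at h
    exact hγ.1.1.apply_ne (nontrivial_of_mem hq hy) hq h.symm

/-- An odd permutation of an `(m+2)`-set has `2 * m!` factorizations into a full cycle and a cycle
missing exactly one point. The inductive step removes a point `p` moved by `σ`. -/
theorem sum_cycCount_erase (m : ℕ) : ∀ (S : Finset α) (σ : Perm α), #S = m + 2 →
    (∀ x, x ∉ S → σ x = x) → sign σ = -1 →
    ∑ x ∈ S, cycCount S (S.erase x) σ = 2 * m.factorial := by
  induction m with
  | zero =>
    intro S σ hS hσ hsg
    obtain ⟨a, b, hab, rfl⟩ := Finset.card_eq_two.1 hS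
    have hσab : σ = swap a b := by
      have ha : σ a = a ∨ σ a = b := by
        simpa using mem_of_fix hσ (show a ∈ ({a, b} : Finset α) by simp)
      have hb : σ b = a ∨ σ b = b := by
        simpa using mem_of_fix hσ (show b ∈ ({a, b} : Finset α) by simp)
      have hne : σ ≠ 1 := by rintro rfl; simp at hsg
      have hout : ∀ z, z ≠ a → z ≠ b → σ z = z := fun z h1 h2 => hσ z (by simp [h1, h2])
      have hinj : σ a ≠ σ b := fun h => hab (σ.injective h)
      have hcase : σ a = b := by
        rcases ha with ha | ha
        · exfalso
          apply hne
          ext z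
          by_cases hz : z = a
          · simp [hz, ha]
          · by_cases hz' : z = b
            · subst hz'
              rcases hb with hb | hb
              · exact absurd (ha.trans hb.symm) hinj
              · simp [hb]
            · simp [hout z hz hz']
        · exact ha
      have hcase' : σ b = a := by
        rcases hb with hb | hb
        · exact hb
        · exact absurd (hcase.trans hb.symm) hinj
      ext z
      by_cases hz : z = a
      · simp [hz, hcase]
      · by_cases hz' : z = b
        · simp [hz', hcase']
        · rw [hout z hz hz', swap_apply_of_ne_of_ne hz hz']
    have hone : ∀ c : α, ∀ γ : Perm α, Cyc {c} γ ↔ γ = 1 := by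
      intro c γ
      constructor
      · rintro ⟨h1, h2⟩
        rw [Finset.coe_singleton, isCycleOn_singleton] at h1
        ext z
        by_cases hz : z = c
        · simp [hz, h1]
        · simpa using h2 z (by simpa using hz)
      · rintro rfl
        exact ⟨by simp, by simp⟩
    have hfull : Cyc {a, b} (swap a b) := by
      have := Cyc.insert_point (p := a) (q := b) (S := {b}) (δ := 1) (by simpa using hab)
        (by simp) ((hone b 1).2 rfl)
      simpa using this
    have hcount : ∀ c, cycCount {a, b} {c} σ = 1 := by
      intro c
      classical
      rw [cycCount, Finset.card_eq_one]
      refine ⟨1, ?_⟩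
      ext γ
      simp only [Finset.mem_filter, Finset.mem_univ, true_and, Finset.mem_singleton, hone]
      constructor
      · exact fun h => h.1
      · rintro rfl
        exact ⟨rfl, by rw [mul_one, hσab]; exact hfull⟩
    rw [Finset.sum_pair hab]
    have e1 : ({a, b} : Finset α).erase a = {b} := by
      ext z; simp; grind
    have e2 : ({a, b} : Finset α).erase b = {a} := by
      ext z; simp; grind
    rw [e1, e2, hcount, hcount]
    simp
  | succ m ih =>
    intro S σ hS hσ hsg
    obtain ⟨p, hpσ⟩ : ∃ p, σ p ≠ p := by
      by_contra! h
      have : σ = 1 := by ext z; simp [h z]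
      rw [this] at hsg
      simp at hsg
    have hp : p ∈ S := by
      by_contra h
      exact hpσ (hσ p h)
    obtain ⟨q₀, hq₀⟩ : ∃ q₀, σ q₀ = p := ⟨σ⁻¹ p, by simp⟩
    have hq₀p : q₀ ≠ p := by rintro rfl; exact hpσ hq₀
    have hq₀S : q₀ ∈ S := by
      by_contra h
      exact h ((hσ q₀ h).symm.trans hq₀ ▸ hp)
    have hσq₀ : ∀ q, σ q = p ↔ q = q₀ := fun q =>
      ⟨fun h => σ.injective (h.trans hq₀.symm), fun h => h ▸ hq₀⟩
    set S' := S.erase p with hS'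
    have hcard : #S' = m + 2 := by rw [hS', Finset.card_erase_of_mem hp, hS]; rfl
    have hq₀S' : q₀ ∈ S' := Finset.mem_erase.2 ⟨hq₀p, hq₀S⟩
    have hne : ∀ x ∈ S', (S'.erase x).Nonempty := by
      intro x hx
      rw [← Finset.card_pos, Finset.card_erase_of_mem hx, hcard]
      omega
    have hne' : S'.Nonempty := ⟨q₀, hq₀S'⟩
    have hconj : ∀ q, swap p (σ q) * σ = σ * swap q₀ q := fun q => by
      rw [mul_swap_eq_swap_mul, hq₀]
    -- the contribution of `γ` with fixed point `x` and `γ p = q`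
    set G : α → α → ℕ := fun x q => cycCount S' (S'.erase x) (σ * swap q₀ q * swap p q) with hG
    have hterm : ∀ x ∈ S', cycCount S (S.erase x) σ =
        ∑ q ∈ S'.erase x, if q = q₀ then 0 else G x q := by
      intro x hx
      have hxp : p ≠ x := (Finset.ne_of_mem_erase hx).symm
      have e : (S.erase x).erase p = S'.erase x := Finset.erase_right_comm
      rw [cycCount_split_image (Finset.mem_erase.2 ⟨hxp, hp⟩) (by rw [e]; exact hne x hx), e]
      refine Finset.sum_congr rfl fun q hq => ?_
      have hqS' : q ∈ S' := Finset.mem_of_mem_erase hq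
      have hqS : q ∈ S := Finset.mem_of_mem_erase hqS'
      rw [cycCount_bypass (p := p) ?_ hp ?_ hne']
      · have : (σ * swap p q) p = σ q := by simp
        simp only [this, hσq₀, hG]
        rw [← mul_assoc, hconj]
      · intro z hz
        rw [Perm.mul_apply, swap_apply_of_ne_of_ne, hσ z hz]
        · rintro rfl; exact hz hp
        · rintro rfl; exact hz hqS
      · intro h
        exact Finset.notMem_erase p S (Finset.mem_of_mem_erase h)
    -- the terms with fixed point `p` supply the diagonal terms absent from `hterm`
    have hpterm : cycCount S S' σ = ∑ x ∈ S', if x = q₀ then 0 else G x x := by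
      rw [cycCount_bypass hσ hp (Finset.notMem_erase p S) hne', if_neg hpσ, hconj,
        cycCount_split_preimage hq₀S' (hne _ hq₀S'), ← Finset.add_sum_erase S' _ hq₀S', if_pos rfl,
        zero_add]
      refine Finset.sum_congr rfl fun x hx => ?_
      have hxq := Finset.ne_of_mem_erase hx
      have hxp := Finset.ne_of_mem_erase (Finset.mem_of_mem_erase hx)
      rw [if_neg hxq, hG, mul_assoc, swap_mul_swap_aux hq₀p hxp hxq, ← mul_assoc]
    have hIH : ∀ q ∈ S', q ≠ q₀ → ∑ x ∈ S', G x q = 2 * m.factorial := by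
      intro q hq hqq
      have hqp := Finset.ne_of_mem_erase hq
      refine ih S' _ hcard ?_ ?_
      · intro z hz
        by_cases hzp : z = p
        · subst hzp
          rw [Perm.mul_apply, swap_apply_left, Perm.mul_apply, swap_apply_right, hq₀]
        · have hzS : z ∉ S := fun h => hz (Finset.mem_erase.2 ⟨hzp, h⟩)
          have hzq : z ≠ q := by rintro rfl; exact hz hq
          have hzq₀ : z ≠ q₀ := by rintro rfl; exact hz hq₀S'
          rw [Perm.mul_apply, swap_apply_of_ne_of_ne hzp hzq, Perm.mul_apply,
            swap_apply_of_ne_of_ne hzq₀ hzq, hσ z hzS]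
      · rw [Perm.sign_mul, Perm.sign_mul, sign_swap (Ne.symm hqq), sign_swap (Ne.symm hqp), hsg]
        decide
    rw [← Finset.add_sum_erase S _ hp, hpterm, ← hS', Finset.sum_congr rfl hterm,
      ← Finset.sum_add_distrib]
    have : ∀ x ∈ S', ((if x = q₀ then 0 else G x x) +
        ∑ q ∈ S'.erase x, if q = q₀ then 0 else G x q) =
        ∑ q ∈ S', if q = q₀ then 0 else G x q := fun x hx =>
      Finset.add_sum_erase S' (fun q => if q = q₀ then 0 else G x q) hx
    rw [Finset.sum_congr rfl this, Finset.sum_comm, ← Finset.add_sum_erase S' _ hq₀S']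
    simp only [if_true, Finset.sum_const_zero, zero_add]
    rw [Finset.sum_congr rfl (g := fun _ => 2 * m.factorial), Finset.sum_const,
      Finset.card_erase_of_mem hq₀S', hcard, Nat.factorial_succ, smul_eq_mul]
    · simp only [show m + 2 - 1 = m + 1 from rfl]; ring
    · intro q hq
      have hqq := Finset.ne_of_mem_erase hq
      simp only [if_neg hqq]
      exact hIH q (Finset.mem_of_mem_erase hq) hqq

end

/-! ### Cycles missing two or three points -/

section
variable {α : Type*} [DecidableEq α] [Fintype α]

theorem sum_support {S : Finset α} {σ : Perm α} (hσ : ∀ x, x ∉ S → σ x = x) (f : α → ℕ) :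
    (∑ x ∈ S, if σ x = x then 0 else f x) = ∑ x ∈ σ.support, f x := by
  have : σ.support = S.filter fun x => ¬ σ x = x := by
    ext x
    rw [mem_support, Finset.mem_filter]
    exact ⟨fun h => ⟨by_contra fun h' => h (hσ x h'), h⟩, fun h => h.2⟩
  rw [this, Finset.sum_filter]
  exact Finset.sum_congr rfl fun x _ => by by_cases h : σ x = x <;> simp [h]

theorem sum_cycCount_erase_two {m : ℕ} {S : Finset α} {σ : Perm α} (hS : #S = m + 3)
    (hσ : ∀ x, x ∉ S → σ x = x) (hsg : sign σ = 1) :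
    ∑ x ∈ S, ∑ y ∈ S.erase x, cycCount S ((S.erase x).erase y) σ =
      #σ.support * (2 * m.factorial) := by
  have h1 : ∀ x ∈ S, ∑ y ∈ S.erase x, cycCount S ((S.erase x).erase y) σ =
      if σ x = x then 0 else 2 * m.factorial := by
    intro x hx
    have hc : #(S.erase x) = m + 2 := by rw [Finset.card_erase_of_mem hx, hS]; rfl
    have hb : ∀ y, cycCount S ((S.erase x).erase y) σ = if σ x = x then 0 else
        cycCount (S.erase x) ((S.erase x).erase y) (swap x (σ x) * σ) := fun y =>
      cycCount_bypass hσ hx (by simp) (by rw [← Finset.card_pos, hc]; omega)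
    simp only [hb]
    split_ifs with h
    · simp
    · refine sum_cycCount_erase m _ _ hc (bypass_fix hσ hx) ?_
      rw [Perm.sign_mul, sign_swap (Ne.symm h), hsg, mul_one]
  rw [Finset.sum_congr rfl h1, sum_support hσ, Finset.sum_const, smul_eq_mul]

theorem sum_cycCount_erase_three {m : ℕ} {S : Finset α} {σ : Perm α} (hS : #S = m + 4)
    (hσ : ∀ x, x ∉ S → σ x = x) (hsg : sign σ = -1) :
    ∑ x ∈ S, ∑ y ∈ S.erase x, ∑ z ∈ (S.erase x).erase y,
        cycCount S (((S.erase x).erase y).erase z) σ =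
      ∑ x ∈ σ.support, #(swap x (σ x) * σ).support * (2 * m.factorial) := by
  have h1 : ∀ x ∈ S, ∑ y ∈ S.erase x, ∑ z ∈ (S.erase x).erase y,
        cycCount S (((S.erase x).erase y).erase z) σ =
      if σ x = x then 0 else #(swap x (σ x) * σ).support * (2 * m.factorial) := by
    intro x hx
    have hc : #(S.erase x) = m + 3 := by rw [Finset.card_erase_of_mem hx, hS]; rfl
    have hb : ∀ y z, cycCount S (((S.erase x).erase y).erase z) σ = if σ x = x then 0 else
        cycCount (S.erase x) (((S.erase x).erase y).erase z) (swap x (σ x) * σ) := fun y z =>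
      cycCount_bypass hσ hx (by simp) (by rw [← Finset.card_pos, hc]; omega)
    simp only [hb]
    split_ifs with h
    · simp
    · refine sum_cycCount_erase_two hc (bypass_fix hσ hx) ?_
      rw [Perm.sign_mul, sign_swap (Ne.symm h), hsg]
      decide
  rw [Finset.sum_congr rfl h1, sum_support hσ]

theorem card_support_bypass {σ : Perm α} {x : α} (hx : x ∈ σ.support) :
    #(swap x (σ x) * σ).support + 1 + (if σ (σ x) = x then 1 else 0) = #σ.support := by
  rw [mem_support] at hx
  split_ifs with h
  · have hs : (swap x (σ x) * σ).support = (σ.support.erase x).erase (σ x) := by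
      ext z
      simp only [mem_support, Finset.mem_erase, Perm.mul_apply, swap_apply_def]
      grind [σ.injective.eq_iff]
    have h1 : σ x ∈ σ.support.erase x := Finset.mem_erase.2 ⟨hx, by simpa [mem_support] using hx⟩
    have h2 : x ∈ σ.support := mem_support.2 hx
    rw [hs]
    have := Finset.card_erase_add_one h1
    have := Finset.card_erase_add_one h2
    omega
  · rw [support_swap_mul_eq _ _ h, ← Finset.erase_eq]
    exact Finset.card_erase_add_one (mem_support.2 hx)

/-- The points on `2`-cycles are twice as many as the `2`-cycles. -/
theorem card_two_cycle_points (σ : Perm α) :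
    #{x ∈ σ.support | σ (σ x) = x} = 2 * σ.cycleType.count 2 := by
  have hcount : σ.cycleType.count 2 = #{c ∈ σ.cycleFactorsFinset | #c.support = 2} := by
    rw [cycleType_def, Multiset.count_map]
    simp only [Function.comp_apply, eq_comm (a := 2)]
    rfl
  have hkey : ∀ c ∈ σ.cycleFactorsFinset, ∀ x ∈ c.support, (#c.support = 2 ↔ σ (σ x) = x) := by
    intro c hc x hx
    obtain ⟨hcyc, hcσ⟩ := mem_cycleFactorsFinset_iff.1 hc
    have hcx : c (c x) = σ (σ x) := by
      rw [hcσ (c x) (apply_mem_support.2 hx), hcσ x hx]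
    rw [← hcx, ← hcyc.orderOf]
    have h1 : c ≠ 1 := hcyc.ne_one
    constructor
    · intro h
      have := pow_orderOf_eq_one c
      rw [h, pow_two] at this
      simpa using Perm.congr_fun this x
    · intro h
      refine orderOf_eq_prime ?_ h1
      exact hcyc.pow_eq_one_iff.2 ⟨x, mem_support.1 hx, by rw [pow_two, Perm.mul_apply, h]⟩
  rw [hcount, Finset.card_eq_sum_card_fiberwise (f := fun x => σ.cycleOf x)
    (t := {c ∈ σ.cycleFactorsFinset | #c.support = 2}), mul_comm, ← smul_eq_mul]
  · refine Finset.sum_const_nat fun c hc => ?_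
    rw [Finset.mem_filter] at hc
    rw [← hc.2]
    congr 1
    ext x
    simp only [Finset.mem_filter]
    constructor
    · rintro ⟨⟨h1, -⟩, rfl⟩
      exact mem_support_cycleOf_iff.2 ⟨SameCycle.refl _ _, h1⟩
    · intro hx
      have hxσ : x ∈ σ.support := mem_cycleFactorsFinset_support_le hc.1 hx
      exact ⟨⟨hxσ, (hkey c hc.1 x hx).1 hc.2⟩, (cycle_is_cycleOf hx hc.1).symm⟩
  · intro x hx
    simp only [Finset.coe_filter, Set.mem_ofPred_eq] at hx ⊢
    have hc := cycleOf_mem_cycleFactorsFinset_iff.2 hx.1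
    exact ⟨hc, (hkey _ hc x (mem_support_cycleOf_iff.2 ⟨SameCycle.refl _ _, hx.1⟩)).2 hx.2⟩

theorem sum_card_support_bypass (σ : Perm α) :
    ((∑ x ∈ σ.support, #(swap x (σ x) * σ).support : ℕ) : ℚ) =
      (#σ.support : ℚ) * (#σ.support - 1) - 2 * σ.cycleType.count 2 := by
  have h : ∑ x ∈ σ.support, (#(swap x (σ x) * σ).support + 1 + (if σ (σ x) = x then 1 else 0)) =
      ∑ x ∈ σ.support, #σ.support := Finset.sum_congr rfl fun x hx => card_support_bypass hx
  rw [Finset.sum_add_distrib, Finset.sum_add_distrib, Finset.sum_const, Finset.sum_const,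
    ← Finset.card_filter, card_two_cycle_points] at h
  have h' := congrArg (Nat.cast : ℕ → ℚ) h
  push_cast [smul_eq_mul] at h' ⊢
  linarith

/-! ### From ordered triples of points to cycles -/

theorem cyc_iff_isCycle {T : Finset α} (hT : 2 ≤ #T) (γ : Perm α) :
    Cyc T γ ↔ γ.IsCycle ∧ γ.support = T := by
  have hnt : (T : Set α).Nontrivial := Finset.one_lt_card_iff_nontrivial.1 hT
  constructor
  · rintro ⟨h1, h2⟩
    have hfix : ∀ x, γ x ≠ x → x ∈ T := fun x hx => by_contra fun h => hx (h2 x h)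
    refine ⟨isCycle_iff_exists_isCycleOn.2 ⟨T, hnt, h1, fun x hx => hfix x hx⟩, ?_⟩
    ext x
    rw [mem_support]
    exact ⟨hfix x, fun hx => h1.apply_ne hnt hx⟩
  · rintro ⟨h1, rfl⟩
    refine ⟨?_, fun x hx => notMem_support.1 hx⟩
    rw [coe_support_eq_set_support]
    exact h1.isCycleOn

/-- A `3`-element set has six orderings. -/
theorem sum_ordered_triples {C : Finset α} (hC : #C = 3) :
    (∑ x : α, ∑ y ∈ univ.erase x, ∑ z ∈ (univ.erase x).erase y,
      if (((univ : Finset α).erase x).erase y).erase z = Cᶜ then 1 else 0) = 6 := by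
  have hiff : ∀ x, ∀ y ∈ univ.erase x, ∀ z ∈ ((univ : Finset α).erase x).erase y,
      ((((univ : Finset α).erase x).erase y).erase z = Cᶜ ↔ x ∈ C ∧ y ∈ C ∧ z ∈ C) := by
    intro x y hy z hz
    simp only [Finset.mem_erase, Finset.mem_univ, and_true] at hy hz
    have e : (((univ : Finset α).erase x).erase y).erase z = ({x, y, z} : Finset α)ᶜ := by
      ext w
      simp only [Finset.mem_erase, Finset.mem_univ, Finset.mem_compl, Finset.mem_insert,
        Finset.mem_singleton]
      grind
    have hc : #({x, y, z} : Finset α) = 3 :=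
      Finset.card_eq_three.2 ⟨x, y, z, hy.symm, hz.2.symm, hz.1.symm, rfl⟩
    rw [e, compl_inj_iff]
    constructor
    · rintro rfl; simp
    · rintro ⟨h1, h2, h3⟩
      refine Finset.eq_of_subset_of_card_le ?_ (by rw [hc, hC])
      simp [Finset.insert_subset_iff, h1, h2, h3]
  have step : ∀ x, ∀ y ∈ univ.erase x, (∑ z ∈ (univ.erase x).erase y,
      if (((univ : Finset α).erase x).erase y).erase z = Cᶜ then 1 else 0) =
      if x ∈ C ∧ y ∈ C then 1 else 0 := by
    intro x y hy
    rw [Finset.sum_congr rfl fun z hz => if_congr (hiff x y hy z hz) rfl rfl, ← Finset.card_filter]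
    by_cases h : x ∈ C ∧ y ∈ C
    · have : (((univ : Finset α).erase x).erase y).filter (fun z => x ∈ C ∧ y ∈ C ∧ z ∈ C) =
          (C.erase x).erase y := by ext z; simp [h, and_assoc]
      have hy' : y ∈ C.erase x := Finset.mem_erase.2 ⟨Finset.ne_of_mem_erase hy, h.2⟩
      rw [if_pos h, this, Finset.card_erase_of_mem hy', Finset.card_erase_of_mem h.1, hC]
    · rw [if_neg h, Finset.card_eq_zero, Finset.filter_eq_empty_iff]
      exact fun z _ hz => h ⟨hz.1, hz.2.1⟩
  have step2 : ∀ x, (∑ y ∈ univ.erase x, ∑ z ∈ (univ.erase x).erase y,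
      if (((univ : Finset α).erase x).erase y).erase z = Cᶜ then 1 else 0) =
      if x ∈ C then 2 else 0 := by
    intro x
    rw [Finset.sum_congr rfl (step x), ← Finset.card_filter]
    by_cases h : x ∈ C
    · have : ((univ : Finset α).erase x).filter (fun y => x ∈ C ∧ y ∈ C) = C.erase x := by
        ext z; simp [h]
      rw [if_pos h, this, Finset.card_erase_of_mem h, hC]
    · rw [if_neg h, Finset.card_eq_zero, Finset.filter_eq_empty_iff]
      exact fun z _ hz => h hz.1
  rw [Finset.sum_congr rfl fun x _ => step2 x, Finset.sum_ite_mem, Finset.univ_inter,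
    Finset.sum_const, hC]
  rfl

open Classical in
/-- A cycle missing three points is counted once for each ordering of these points. -/
theorem sum_cycCount_eq_six_mul {n : ℕ} (hn : 5 ≤ n) (hα : Fintype.card α = n) (σ : Perm α) :
    (∑ x : α, ∑ y ∈ univ.erase x, ∑ z ∈ (univ.erase x).erase y,
        cycCount univ ((((univ : Finset α).erase x).erase y).erase z) σ) =
      6 * #{γ : Perm α | (γ.IsCycle ∧ #γ.support = n - 3) ∧ Cyc univ (σ * γ)} := by
  have h1 : ∀ x, ∀ y ∈ univ.erase x, ∀ z ∈ ((univ : Finset α).erase x).erase y,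
      cycCount univ ((((univ : Finset α).erase x).erase y).erase z) σ =
      ∑ γ ∈ ({γ : Perm α | (γ.IsCycle ∧ #γ.support = n - 3) ∧ Cyc univ (σ * γ)} :
        Finset (Perm α)),
        if (((univ : Finset α).erase x).erase y).erase z = γ.supportᶜᶜ then 1 else 0 := by
    intro x y hy z hz
    have hc : #((((univ : Finset α).erase x).erase y).erase z) = n - 3 := by
      rw [Finset.card_erase_of_mem hz, Finset.card_erase_of_mem hy,
        Finset.card_erase_of_mem (Finset.mem_univ x), Finset.card_univ, hα]
      omega
    rw [cycCount, ← Finset.card_filter, Finset.filter_filter]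
    congr 1
    ext γ
    simp only [Finset.mem_filter, Finset.mem_univ, true_and, compl_compl]
    rw [cyc_iff_isCycle (by omega)]
    constructor
    · rintro ⟨⟨h1, h2⟩, h3⟩
      exact ⟨⟨⟨h1, h2 ▸ hc⟩, h3⟩, h2.symm⟩
    · rintro ⟨⟨⟨h1, h2⟩, h3⟩, h4⟩
      exact ⟨⟨h1, h4.symm⟩, h3⟩
  rw [Finset.sum_congr rfl fun x _ => Finset.sum_congr rfl fun y hy =>
    Finset.sum_congr rfl fun z hz => h1 x y hy z hz]
  simp_rw [Finset.sum_comm (t := Finset.filter _ _)]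
  rw [Finset.sum_congr rfl (g := fun _ => 6), Finset.sum_const, smul_eq_mul, mul_comm]
  intro γ hγ
  rw [Finset.mem_filter] at hγ
  refine sum_ordered_triples ?_
  rw [Finset.card_compl, hα, hγ.2.1.2]
  omega

end

/-! ### Translation to cycle types -/

theorem cycleType_eq_filter {n : ℕ} (σ : Perm (Fin n)) :
    σ.cycleType = (fullCycleType σ).filter (· ≠ 1) := by
  rw [fullCycleType, Multiset.filter_add, Multiset.filter_eq_self.2, Multiset.filter_eq_nil.2,
    add_zero]
  · intro a ha h
    exact h (Multiset.eq_of_mem_replicate ha)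
  · intro a ha h
    have := two_le_of_mem_cycleType ha
    omega

theorem fullCycleType_eq_iff {n k : ℕ} (hk : 2 ≤ k) (σ : Perm (Fin n)) :
    fullCycleType σ = k ::ₘ Multiset.replicate (n - k) 1 ↔ σ.IsCycle ∧ #σ.support = k := by
  constructor
  · intro h
    have h1 : σ.cycleType = {k} := by
      rw [cycleType_eq_filter, h, Multiset.filter_cons_of_pos _ (by omega),
        Multiset.filter_eq_nil.2]
      · rfl
      · intro a ha h
        exact h (Multiset.eq_of_mem_replicate ha)
    have hc : σ.IsCycle := card_cycleType_eq_one.1 (by rw [h1, Multiset.card_singleton])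
    refine ⟨hc, ?_⟩
    rw [hc.cycleType] at h1
    exact Multiset.singleton_inj.1 h1
  · rintro ⟨h1, h2⟩
    rw [fullCycleType, h1.cycleType, h2, Multiset.sum_singleton, Multiset.singleton_add]

/-- For `n ≥ 5` and `σ ∈ S_n` with `m₁` fixed points and `m₂` orbits of size `2`, the
number of pairs `(α, β)` with `α` an `n`-cycle, `β` of cycle type `(n-3,1,1,1)` and
`α·β = σ` equals `(1 - ε(σ)) (n-4)! ((n-m₁)(n-m₁-1) - 2 m₂) / 6`. -/
theorem stmt5 (n : ℕ) (hn : 5 ≤ n) (σ : Equiv.Perm (Fin n))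
    (m1 m2 : ℕ) (hm1 : m1 = Multiset.count 1 (fullCycleType σ))
    (hm2 : m2 = Multiset.count 2 (fullCycleType σ)) :
    (Nat.card {p : Equiv.Perm (Fin n) × Equiv.Perm (Fin n) //
        fullCycleType p.1 = {n} ∧
        fullCycleType p.2 = (n - 3) ::ₘ Multiset.replicate 3 1 ∧
        p.1 * p.2 = σ} : ℚ)
      = (1 - ((Equiv.Perm.sign σ : ℤ) : ℚ)) * (n - 4).factorial
          * (((n : ℚ) - m1) * ((n : ℚ) - m1 - 1) - 2 * m2) / 6 := by
  classical
  have hα : Fintype.card (Fin n) = n := Fintype.card_fin n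
  have hfull : ∀ γ : Perm (Fin n), fullCycleType γ = {n} ↔ γ.IsCycle ∧ #γ.support = n := by
    intro γ
    rw [← fullCycleType_eq_iff (by omega), Nat.sub_self]
    rfl
  have hthree : ∀ γ : Perm (Fin n), fullCycleType γ = (n - 3) ::ₘ Multiset.replicate 3 1 ↔
      γ.IsCycle ∧ #γ.support = n - 3 := by
    intro γ
    rw [← fullCycleType_eq_iff (by omega), show n - (n - 3) = 3 by omega]
  have hcyc : ∀ γ : Perm (Fin n), Cyc univ γ ↔ γ.IsCycle ∧ #γ.support = n := by
    intro γ
    rw [cyc_iff_isCycle (by rw [Finset.card_univ, hα]; omega), ← Finset.card_eq_iff_eq_univ, hα]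
  have hsupp : #σ.support ≤ n := by simpa using Finset.card_le_univ σ.support
  have hm1' : (n : ℚ) - m1 = #σ.support := by
    have h0 : σ.cycleType.count 1 = 0 := Multiset.count_eq_zero.2 fun h => by
      have := two_le_of_mem_cycleType h
      omega
    rw [hm1, fullCycleType, Multiset.count_add, h0, Multiset.count_replicate_self, sum_cycleType,
      zero_add, Nat.cast_sub hsupp]
    ring
  have hm2' : m2 = σ.cycleType.count 2 := by
    rw [hm2, fullCycleType, Multiset.count_add, Multiset.count_replicate]
    simp
  rcases Int.units_eq_one_or (sign σ) with hsg | hsg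
  · have : IsEmpty {p : Perm (Fin n) × Perm (Fin n) // fullCycleType p.1 = {n} ∧
        fullCycleType p.2 = (n - 3) ::ₘ Multiset.replicate 3 1 ∧ p.1 * p.2 = σ} := by
      refine ⟨?_⟩
      rintro ⟨⟨a, b⟩, h1, h2, h3⟩
      obtain ⟨ha, ha'⟩ := (hfull a).1 h1
      obtain ⟨hb, hb'⟩ := (hthree b).1 h2
      dsimp only at h3
      rw [← h3, Perm.sign_mul, ha.sign, hb.sign, ha', hb', neg_mul_neg, ← pow_add] at hsg
      have hodd : Odd (n + (n - 3)) := ⟨n - 2, by omega⟩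
      rw [hodd.neg_one_pow] at hsg
      exact absurd hsg (by decide)
    rw [Nat.card_of_isEmpty, hsg]
    simp
  · have hcard : Nat.card {p : Perm (Fin n) × Perm (Fin n) // fullCycleType p.1 = {n} ∧
        fullCycleType p.2 = (n - 3) ::ₘ Multiset.replicate 3 1 ∧ p.1 * p.2 = σ} =
        #{γ : Perm (Fin n) | (γ.IsCycle ∧ #γ.support = n - 3) ∧ Cyc univ (σ * γ)} := by
      rw [Nat.card_eq_fintype_card, Fintype.card_subtype]
      refine Finset.card_bij' (fun p _ => p.2⁻¹) (fun γ _ => (σ * γ, γ⁻¹)) ?_ ?_ ?_ ?_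
      · rintro ⟨a, b⟩ hp
        simp only [Finset.mem_filter, Finset.mem_univ, true_and, hfull, hthree] at hp ⊢
        obtain ⟨h1, h2, rfl⟩ := hp
        rw [hcyc, mul_inv_cancel_right, isCycle_inv, support_inv]
        exact ⟨h2, h1⟩
      · intro γ hγ
        simp only [Finset.mem_filter, Finset.mem_univ, true_and, hfull, hthree, hcyc] at hγ ⊢
        rw [mul_inv_cancel_right, isCycle_inv, support_inv]
        exact ⟨hγ.2, hγ.1, rfl⟩
      · rintro ⟨a, b⟩ hp
        simp only [Finset.mem_filter, Finset.mem_univ, true_and] at hp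
        simp [← hp.2.2]
      · intro γ _
        simp
    obtain ⟨m, rfl⟩ : ∃ m, n = m + 4 := ⟨n - 4, by omega⟩
    have h6 := sum_cycCount_eq_six_mul hn hα σ
    rw [sum_cycCount_erase_three (m := m) (by simp) (by simp) hsg, ← Finset.sum_mul, ← hcard] at h6
    have h6' := congrArg (Nat.cast : ℕ → ℚ) h6
    rw [Nat.cast_mul, sum_card_support_bypass, ← hm2'] at h6'
    rw [hm1', hsg, Nat.add_sub_cancel]
    push_cast at h6' ⊢
    linarith
end

section
/- Let I = (i_1, …, i_k) be a composition of m of length k, and let n ≥ 2 and a ≥ 0 be integers with m ≤ n and a < n. Then n(n+1) · P^I_{n+1, a+1} = (n − m + 1)(n + m) · P^I_{n, a} + Σ_{h=1}^{k} i_h·(i_h − 1) · P^{I−δ_h}_{n, a}, where I − δ_h is the composition obtained from I by decreasing i_h by 1 (terms with i_h = 1 vanish because of the factor i_h(i_h−1)). -/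
/-- `inBlock L p x` means that the (0-indexed) element `x` of `{0,…,L.sum - 1}` lies in
the `p`-th consecutive block of sizes given by the composition `L`. -/
def inBlock (L : List ℕ) (p : ℕ) (x : ℕ) : Prop :=
  (L.take p).sum ≤ x ∧ x < (L.take (p + 1)).sum

/-- `sameBlock L x y` means `x` and `y` lie in the same block of the composition `L`. -/
def sameBlock (L : List ℕ) (x y : ℕ) : Prop :=
  ∃ p < L.length, inBlock L p x ∧ inBlock L p y

/-- A permutation `σ` of `Fin n` is strongly `L`-separated if, for elements of
`{0,…,L.sum - 1}`, being in the same cycle of `σ` is equivalent to being in the same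
block of `L`. -/
def IsStronglySeparated (L : List ℕ) {n : ℕ} (σ : Equiv.Perm (Fin n)) : Prop :=
  ∀ x y : Fin n, (x : ℕ) < L.sum → (y : ℕ) < L.sum →
    (σ.SameCycle x y ↔ sameBlock L (x : ℕ) (y : ℕ))

/-- `sepProb n a L` is the probability that `α·β` is strongly `L`-separated, where `α`
is a uniform random `n`-cycle and `β` an independent uniform random permutation of
cycle type `(n-a, 1^a)` in `S_n`. -/
noncomputable def sepProb (n a : ℕ) (L : List ℕ) : ℚ :=
  (Nat.card {p : Equiv.Perm (Fin n) × Equiv.Perm (Fin n) //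
      fullCycleType p.1 = {n} ∧
      fullCycleType p.2 = (n - a) ::ₘ Multiset.replicate a 1 ∧
      IsStronglySeparated L (p.1 * p.2)} : ℚ) /
  (Nat.card {p : Equiv.Perm (Fin n) × Equiv.Perm (Fin n) //
      fullCycleType p.1 = {n} ∧
      fullCycleType p.2 = (n - a) ::ₘ Multiset.replicate a 1} : ℚ)

open Equiv Equiv.Perm

/-! ### Separation of a partial colouring on an arbitrary finite type -/

/-- The full cycle type (fixed points included) of a permutation of an arbitrary finite type. -/
def genCycleType {V : Type*} [Fintype V] [DecidableEq V] (σ : Perm V) : Multiset ℕ :=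
  σ.cycleType + Multiset.replicate (Fintype.card V - σ.cycleType.sum) 1

/-- `σ` separates the partial colouring `f` (`none` meaning uncoloured): two coloured elements
lie in the same cycle exactly when they have the same colour. -/
def Separates {V ι : Type*} (f : V → Option ι) (σ : Perm V) : Prop :=
  ∀ x y c d, f x = some c → f y = some d → (σ.SameCycle x y ↔ c = d)

/-- The number of pairs `(α, β)` with `α` a full cycle, `β` of full cycle type `μ` and `α * β`
separating the partial colouring `f`. -/
noncomputable def sepCount {V ι : Type*} [Fintype V] [DecidableEq V] (μ : Multiset ℕ)
    (f : V → Option ι) : ℕ :=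
  Nat.card {p : Perm V × Perm V //
    (∀ x y, p.1.SameCycle x y) ∧ genCycleType p.2 = μ ∧ Separates f (p.1 * p.2)}

lemma fullCycleType_eq_genCycleType {n : ℕ} (σ : Perm (Fin n)) :
    fullCycleType σ = genCycleType σ := by
  simp [fullCycleType, genCycleType]

lemma fullCycleType_eq_singleton_iff {n : ℕ} (hn : 2 ≤ n) (σ : Perm (Fin n)) :
    fullCycleType σ = {n} ↔ ∀ x y, σ.SameCycle x y := by
  have : NeZero n := ⟨by omega⟩
  constructor
  · intro h x y
    have hmem : n ∈ σ.cycleType := by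
      have : n ∈ fullCycleType σ := by rw [h]; simp
      rcases Multiset.mem_add.1 this with h1 | h1
      · exact h1
      · have := Multiset.eq_of_mem_replicate h1
        omega
    have hle : σ.cycleType ≤ {n} := by
      rw [← h]; exact Multiset.le_add_right _ _
    have hcard : Multiset.card σ.cycleType = 1 := by
      have h1 := Multiset.card_le_card hle
      have h2 : 0 < Multiset.card σ.cycleType := Multiset.card_pos_iff_exists_mem.2 ⟨n, hmem⟩
      simp at h1
      omega
    have hc := card_cycleType_eq_one.1 hcard
    have hs : σ.support = Finset.univ := by
      rw [hc.cycleType, Multiset.mem_singleton] at hmem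
      rw [← Finset.card_eq_iff_eq_univ, ← hmem, Fintype.card_fin]
    refine hc.sameCycle ?_ ?_ <;> rw [← mem_support, hs] <;> simp
  · intro h
    have hfix : ∀ x, σ x ≠ x := by
      intro x hx
      have h1 : ∀ y, x = y := fun y => (h x y).eq_of_left hx
      have h2 := (h1 ⟨0, by omega⟩).symm.trans (h1 ⟨1, by omega⟩)
      simp at h2
    have hs : σ.support = Finset.univ := by
      ext x; simp [hfix x]
    have hc : σ.IsCycle := ⟨0, hfix 0, fun y _ => h 0 y⟩
    simp [fullCycleType, hc.cycleType, hs]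

/-! ### Invariance under relabelling -/

lemma cycleType_permCongr {V W : Type*} [Fintype V] [DecidableEq V] [Fintype W] [DecidableEq W]
    (e : V ≃ W) (σ : Perm V) : (e.permCongr σ).cycleType = σ.cycleType := by
  rw [← cycleType_extendDomain (g := σ) (p := fun _ : W => True)
    (e.trans (Equiv.Set.univ W).symm)]
  congr 1

lemma genCycleType_permCongr {V W : Type*} [Fintype V] [DecidableEq V] [Fintype W]
    [DecidableEq W] (e : V ≃ W) (σ : Perm V) :
    genCycleType (e.permCongr σ) = genCycleType σ := by
  rw [genCycleType, cycleType_permCongr, Fintype.card_congr e.symm, genCycleType]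

/-- Adding a fixed point does not change the nontrivial cycles. -/
lemma cycleType_optionCongr {W : Type*} [Fintype W] [DecidableEq W] (σ : Perm W) :
    cycleType (optionCongr σ) = σ.cycleType := by
  rw [← cycleType_extendDomain (g := σ) (p := fun x : Option W => x.isSome)
    (optionIsSomeEquiv W).symm]
  congr 1
  ext1 x
  cases x with
  | none => rw [extendDomain_apply_not_subtype _ _ (by simp)]; simp
  | some x =>
    rw [extendDomain_apply_subtype _ _ (by simp)]; simp

lemma genCycleType_optionCongr {W : Type*} [Fintype W] [DecidableEq W] (σ : Perm W) :
    genCycleType (optionCongr σ : Perm (Option W)) = 1 ::ₘ genCycleType σ := by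
  have := sum_cycleType_le σ
  rw [genCycleType, cycleType_optionCongr, genCycleType, Fintype.card_option,
    Nat.succ_sub this, Multiset.replicate_succ, Multiset.add_cons]

lemma sameCycle_permCongr {V W : Type*} (e : V ≃ W) (σ : Perm V) (x y : V) :
    SameCycle (e.permCongr σ) (e x) (e y) ↔ σ.SameCycle x y := by
  have h : ∀ k : ℤ, (e.permCongr σ) ^ k = e.permCongr (σ ^ k) := fun k =>
    (map_zpow e.permCongrHom σ k).symm
  simp [SameCycle, h]

/-- The number of fixed points is the multiplicity of the part `1` in the full cycle type. -/
lemma card_fixed_eq_count {V : Type*} [Fintype V] [DecidableEq V] (σ : Perm V) :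
    Nat.card {j // σ j = j} = (genCycleType σ).count 1 := by
  have h1 : σ.cycleType.count 1 = 0 :=
    Multiset.count_eq_zero.2 fun h => by simpa using one_lt_of_mem_cycleType h
  rw [genCycleType, Multiset.count_add, h1, Multiset.count_replicate_self, zero_add,
    sum_cycleType, ← Finset.card_compl, Nat.card_eq_fintype_card, Fintype.card_subtype]
  congr 1
  ext x
  simp

lemma Separates.comp_equiv_iff {V W ι : Type*} (e : V ≃ W) (f : W → Option ι) (σ : Perm V) :
    Separates f (e.permCongr σ) ↔ Separates (f ∘ e) σ := by
  constructor
  · intro h x y c d hx hy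
    rw [← sameCycle_permCongr e]
    exact h _ _ c d hx hy
  · intro h x y c d hx hy
    obtain ⟨x, rfl⟩ := e.surjective x
    obtain ⟨y, rfl⟩ := e.surjective y
    rw [sameCycle_permCongr]
    exact h _ _ c d hx hy

/-- Transport of the condition defining `sepCount` along a relabelling, with a marked point. -/
lemma pair_condition_permCongr {V W ι : Type*} [Fintype V] [DecidableEq V] [Fintype W]
    [DecidableEq W] (e : V ≃ W) (μ : Multiset ℕ) (f : W → Option ι) (p : Perm V × Perm V) :
    ((∀ x y, SameCycle (e.permCongr p.1) x y) ∧ genCycleType (e.permCongr p.2) = μ ∧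
      Separates f (e.permCongr p.1 * e.permCongr p.2)) ↔
    ((∀ x y, p.1.SameCycle x y) ∧ genCycleType p.2 = μ ∧ Separates (f ∘ e) (p.1 * p.2)) := by
  have h : e.permCongr p.1 * e.permCongr p.2 = e.permCongr (p.1 * p.2) :=
    (map_mul e.permCongrHom p.1 p.2).symm
  rw [h, Separates.comp_equiv_iff, genCycleType_permCongr]
  refine and_congr_left fun _ => ?_
  constructor
  · intro h x y
    exact (sameCycle_permCongr e _ _ _).1 (h (e x) (e y))
  · intro h x y
    obtain ⟨x, rfl⟩ := e.surjective x
    obtain ⟨y, rfl⟩ := e.surjective y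
    exact (sameCycle_permCongr e _ _ _).2 (h x y)

lemma sepCount_comp_equiv {V W ι : Type*} [Fintype V] [DecidableEq V] [Fintype W]
    [DecidableEq W] (e : V ≃ W) (μ : Multiset ℕ) (f : W → Option ι) :
    sepCount μ (f ∘ e) = sepCount μ f :=
  Nat.card_congr ((e.permCongr.prodCongr e.permCongr).subtypeEquiv fun p =>
    (pair_condition_permCongr e μ f p).symm)

/-! ### Inserting a point into a cycle -/

/-- An equivalence relation relating every `x` to `σ x` is implied by being in the same cycle. -/
lemma SameCycle.of_forall_step {V : Type*} {σ : Perm V} {R : V → V → Prop} (hR : Equivalence R)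
    (h : ∀ x, R x (σ x)) {x y : V} (hxy : σ.SameCycle x y) : R x y := by
  obtain ⟨k, rfl⟩ := hxy
  induction k using Int.induction_on with
  | zero => exact hR.refl x
  | succ k ih =>
    refine hR.trans ih ?_
    rw [add_comm, zpow_add, zpow_one]
    exact h _
  | pred k ih =>
    refine hR.trans ih (hR.symm ?_)
    convert h _ using 1
    rw [← Perm.mul_apply, ← zpow_one_add]
    congr 2
    ring

/-- Left multiplication by `swap none (some i)` inserts `none` immediately before `i` in its
cycle, so it does not change the cycle partition of the old elements, and `none` joins the cycle
of `i`. -/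
lemma sameCycle_insert {W : Type*} [DecidableEq W] (σ : Perm W) (i : W) (u v : Option W) :
    SameCycle (swap none (some i) * optionCongr σ) u v ↔ σ.SameCycle (u.getD i) (v.getD i) := by
  set τ : Perm (Option W) := swap none (some i) * optionCongr σ with hτ
  have hnone : τ none = some i := by simp [hτ]
  have hsome : ∀ x, σ x = i → τ (some x) = none := by
    intro x hx; simp [hτ, hx]
  have hsome' : ∀ x, σ x ≠ i → τ (some x) = some (σ x) := by
    intro x hx
    simp [hτ, swap_apply_of_ne_of_ne, hx]
  constructor
  · refine SameCycle.of_forall_step (R := fun u v : Option W => σ.SameCycle (u.getD i) (v.getD i))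
      ⟨fun _ => SameCycle.rfl, SameCycle.symm, SameCycle.trans⟩ ?_
    intro u
    cases u with
    | none => simp [hnone, SameCycle.rfl]
    | some x =>
      by_cases hx : σ x = i
      · rw [hsome x hx]
        simpa [← hx] using SameCycle.rfl
      · rw [hsome' x hx]
        simpa using SameCycle.rfl
  · intro h
    have hn : τ.SameCycle none (some i) := ⟨1, by simpa using hnone⟩
    have hu : ∀ u : Option W, τ.SameCycle u (some (u.getD i)) := by
      intro u
      cases u with
      | none => exact hn
      | some x => exact SameCycle.rfl
    refine (hu u).trans (SameCycle.trans ?_ (hu v).symm)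
    refine SameCycle.of_forall_step (R := fun x y => τ.SameCycle (some x) (some y))
      ⟨fun _ => SameCycle.rfl, SameCycle.symm, SameCycle.trans⟩ ?_ h
    intro x
    by_cases hx : σ x = i
    · rw [hx]
      refine SameCycle.trans ⟨1, ?_⟩ hn
      simpa using hsome x hx
    · exact ⟨1, by simpa using hsome' x hx⟩

/-- An uncoloured point may be inserted anywhere. -/
lemma separates_insert_of_none {W ι : Type*} [DecidableEq W] (F : Option W → Option ι)
    (σ : Perm W) (i : W) (h : F none = none) :
    Separates F (swap none (some i) * optionCongr σ) ↔ Separates (F ∘ some) σ := by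
  constructor
  · intro H x y c d hx hy
    simpa [sameCycle_insert] using H (some x) (some y) c d hx hy
  · intro H x y c d hx hy
    rw [sameCycle_insert]
    cases x with
    | none => simp [h] at hx
    | some x =>
      cases y with
      | none => simp [h] at hy
      | some y => exact H x y c d hx hy

/-- A coloured point inserted before an uncoloured `i` puts its colour on the cycle of `i`, as if
`i` itself carried that colour. -/
lemma separates_insert_of_some_none {W ι : Type*} [DecidableEq W] (F : Option W → Option ι)
    (σ : Perm W) (i : W) (hi : F (some i) = none) :
    Separates F (swap none (some i) * optionCongr σ) ↔
      Separates (Function.update (F ∘ some) i (F none)) σ := by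
  -- the updated colouring reads off `F` along the section `i ↦ none`, `x ↦ some x` of `getD i`
  have key : ∀ x, Function.update (F ∘ some) i (F none) x
      = F (if x = i then none else some x) := by
    intro x
    by_cases hx : x = i <;> simp [hx]
  have key2 : ∀ x : Option W, ∀ c, F x = some c → (if x.getD i = i then none else some (x.getD i))
      = x := by
    intro x c hx
    cases x with
    | none => simp
    | some x =>
      by_cases h : x = i
      · subst h; simp [hi] at hx
      · simp [h]
  constructor
  · intro H x y c d hx hy
    rw [key] at hx hy
    have := H _ _ c d hx hy
    rw [sameCycle_insert] at this
    convert this using 2 <;> split_ifs <;> simp [*]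
  · intro H x y c d hx hy
    rw [sameCycle_insert]
    apply H _ _ c d <;> rw [key]
    · rwa [key2 x c hx]
    · rwa [key2 y d hy]

/-- A coloured point inserted before a coloured `i` must have the colour of `i`. -/
lemma separates_insert_of_some_some {W ι : Type*} [DecidableEq W] (F : Option W → Option ι)
    (σ : Perm W) (i : W) (h : F none ≠ none) (hi : F (some i) ≠ none) :
    Separates F (swap none (some i) * optionCongr σ) ↔
      F (some i) = F none ∧ Separates (F ∘ some) σ := by
  obtain ⟨a, ha⟩ := Option.ne_none_iff_exists'.1 h
  obtain ⟨b, hb⟩ := Option.ne_none_iff_exists'.1 hi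
  constructor
  · intro H
    refine ⟨?_, ?_⟩
    · have := (H none (some i) a b ha hb).1 (by rw [sameCycle_insert]; exact SameCycle.rfl)
      rw [ha, hb, this]
    · intro x y c d hx hy
      simpa [sameCycle_insert] using H (some x) (some y) c d hx hy
  · rintro ⟨h1, H⟩ x y c d hx hy
    rw [sameCycle_insert]
    apply H
    · cases x with
      | none => simpa [h1] using hx
      | some x => simpa using hx
    · cases y with
      | none => simpa [h1] using hy
      | some y => simpa using hy

/-! ### Counting pairs whose second component fixes a given point -/

/-- The pairs `(α', β')` on `Option W` with `β'` fixing `none` are obtained from the pairs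
`(α, β)` on `W` by extending `β` and inserting `none` before some `i` in the cycle of `α`. -/
lemma card_pairs_fix_none {W ι : Type*} [Fintype W] [DecidableEq W] [Nonempty W]
    (μ : Multiset ℕ) (F : Option W → Option ι) :
    Nat.card {p : Perm (Option W) × Perm (Option W) // ((∀ x y, p.1.SameCycle x y) ∧
      genCycleType p.2 = 1 ::ₘ μ ∧ Separates F (p.1 * p.2)) ∧ p.2 none = none} =
    ∑ i : W, Nat.card {q : Perm W × Perm W // (∀ x y, q.1.SameCycle x y) ∧
      genCycleType q.2 = μ ∧
      Separates F (swap none (some i) * optionCongr (q.1 * q.2))} := by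
  rw [← Nat.card_sigma]
  symm
  have hmul : ∀ (i : W) (q : Perm W × Perm W),
      (swap none (some i) * optionCongr q.1 : Perm (Option W)) * optionCongr q.2 =
        swap none (some i) * optionCongr (q.1 * q.2) := by
    intro i q
    rw [mul_assoc]
    congr 1
    ext1 x
    cases x <;> simp
  have htrans : ∀ (i : W) (σ : Perm W),
      (∀ x y, SameCycle (swap none (some i) * optionCongr σ) x y) ↔ ∀ x y, σ.SameCycle x y := by
    intro i σ
    simp only [sameCycle_insert]
    exact ⟨fun h x y => h (some x) (some y), fun h x y => h _ _⟩
  refine Nat.card_eq_of_bijective (fun s => ⟨(swap none (some s.1) * optionCongr s.2.1.1,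
    optionCongr s.2.1.2), ⟨⟨(htrans _ _).2 s.2.2.1, ?_, ?_⟩, ?_⟩⟩) ⟨?_, ?_⟩
  · rw [genCycleType_optionCongr, s.2.2.2.1]
  · dsimp only
    rw [hmul]
    exact s.2.2.2.2
  · simp
  · rintro ⟨i, ⟨⟨q1, q2⟩, hq⟩⟩ ⟨i', ⟨⟨q1', q2'⟩, hq'⟩⟩ h
    simp only [Subtype.mk.injEq, Prod.mk.injEq] at h
    obtain ⟨h1, h2⟩ := h
    have h3 := decomposeOption.symm.injective (a₁ := (some i, q1)) (a₂ := (some i', q1')) h1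
    simp only [Prod.mk.injEq, Option.some.injEq] at h3
    have h4 := optionCongr_injective h2
    obtain ⟨rfl, rfl⟩ := h3
    subst h4
    rfl
  · rintro ⟨⟨p1, p2⟩, ⟨h1, h2, h3⟩, h4⟩
    dsimp only at h1 h2 h3 h4
    obtain ⟨⟨j, σ⟩, rfl⟩ := decomposeOption.symm.surjective p1
    obtain ⟨β, rfl⟩ : ∃ β : Perm W, p2 = optionCongr β := by
      refine ⟨removeNone p2, ?_⟩
      rw [map_equiv_removeNone, h4]
      simp [Perm.one_def]
    rw [decomposeOption_symm_apply] at h1 h3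
    dsimp only at h1 h3
    cases j with
    | none =>
      exfalso
      obtain ⟨w⟩ := ‹Nonempty W›
      have := (h1 none (some w)).eq_of_left (by simp [Function.IsFixedPt])
      simp at this
    | some i =>
      refine ⟨⟨i, ⟨(σ, β), (htrans _ _).1 h1, ?_, ?_⟩⟩, ?_⟩
      · rw [genCycleType_optionCongr] at h2
        exact (Multiset.cons_inj_right 1).1 h2
      · rw [← hmul]; exact h3
      · simp

/-- The number of elements of colour `c` (`c = none` counting the uncoloured elements). -/
def fiberCard {V : Type*} [Fintype V] (f : V → Option ℕ) (c : Option ℕ) : ℕ :=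
  (Finset.univ.filter fun x => f x = c).card

/-- Colourings with equally large colour classes differ by a bijection, hence have the same number
of separating pairs. -/
lemma sepCount_eq_of_fiberCard {V W : Type*} [Fintype V] [DecidableEq V] [Fintype W]
    [DecidableEq W] (μ : Multiset ℕ) (f : V → Option ℕ) (g : W → Option ℕ)
    (h : ∀ c, fiberCard f c = fiberCard g c) : sepCount μ f = sepCount μ g := by
  have e : ∀ c, {x // f x = c} ≃ {y // g y = c} := fun c =>
    Fintype.equivOfCardEq (by
      rw [Fintype.card_subtype, Fintype.card_subtype]; exact h c)
  have he : g ∘ ofFiberEquiv e = f := funext fun x => ofFiberEquiv_map e x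
  rw [← he, sepCount_comp_equiv]

lemma fiberCard_option {W : Type*} [Fintype W] (F : Option W → Option ℕ) (c : Option ℕ) :
    fiberCard F c = fiberCard (F ∘ some) c + if c = F none then 1 else 0 := by
  classical
  simp only [fiberCard, Finset.card_filter, Fintype.sum_option, Function.comp_apply]
  rw [add_comm]
  simp only [eq_comm]

/-- Transferring the colour of `none` to an uncoloured `i` and deleting `none` removes one uncoloured
point and keeps the size of every colour class. -/
lemma fiberCard_update {W : Type*} [Fintype W] [DecidableEq W] (F : Option W → Option ℕ) (i : W)
    (hi : F (some i) = none) (c : Option ℕ) :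
    fiberCard F c = fiberCard (Function.update (F ∘ some) i (F none)) c
      + if c = none then 1 else 0 := by
  simp only [fiberCard, Finset.card_filter, Fintype.sum_option]
  rw [← Finset.add_sum_erase _ _ (Finset.mem_univ i), hi,
    ← Finset.add_sum_erase _ (fun x => if Function.update (F ∘ some) i (F none) x = c then 1
      else 0) (Finset.mem_univ i)]
  have : ∀ x ∈ Finset.univ.erase i, (if F (some x) = c then 1 else 0) =
      if Function.update (F ∘ some) i (F none) x = c then 1 else 0 := by
    intro x hx
    rw [Function.update_of_ne (Finset.ne_of_mem_erase hx)]
    rfl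
  rw [Finset.sum_congr rfl this]
  simp only [Function.update_self, eq_comm (a := (none : Option ℕ))]
  ring

lemma card_pairs_fix_none_of_none {W : Type*} [Fintype W] [DecidableEq W] [Nonempty W]
    (μ : Multiset ℕ) (F : Option W → Option ℕ) (h : F none = none) :
    Nat.card {p : Perm (Option W) × Perm (Option W) // ((∀ x y, p.1.SameCycle x y) ∧
      genCycleType p.2 = 1 ::ₘ μ ∧ Separates F (p.1 * p.2)) ∧ p.2 none = none} =
    Fintype.card W * sepCount μ (F ∘ some) := by
  rw [card_pairs_fix_none]
  simp only [separates_insert_of_none _ _ _ h]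
  simp [sepCount]

/-- If the removed point `none` has colour `h`, it may be inserted before any of the other points
of colour `h`, or before an uncoloured point `i`; in the latter case `i` takes over the colour. -/
lemma card_pairs_fix_none_of_some {W : Type*} [Fintype W] [DecidableEq W] [Nonempty W]
    (μ : Multiset ℕ) (F : Option W → Option ℕ) (h : F none ≠ none) (A : ℕ)
    (hA : ∀ i, F (some i) = none → sepCount μ (Function.update (F ∘ some) i (F none)) = A) :
    Nat.card {p : Perm (Option W) × Perm (Option W) // ((∀ x y, p.1.SameCycle x y) ∧
      genCycleType p.2 = 1 ::ₘ μ ∧ Separates F (p.1 * p.2)) ∧ p.2 none = none} =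
    fiberCard F none * A + (fiberCard F (F none) - 1) * sepCount μ (F ∘ some) := by
  rw [card_pairs_fix_none, fiberCard_option F (F none), fiberCard_option F none]
  simp only [if_true, h.symm, if_false, add_zero, Nat.add_sub_cancel]
  simp only [fiberCard, Finset.card_filter, Finset.sum_mul, ← Finset.sum_add_distrib]
  refine Finset.sum_congr rfl fun i _ => ?_
  by_cases hi : F (some i) = none
  · simp only [separates_insert_of_some_none _ _ _ hi]
    simp only [Function.comp, hi, if_true, h.symm, if_false, zero_mul, add_zero, one_mul]
    exact hA i hi
  · simp only [separates_insert_of_some_some _ _ _ h hi]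
    by_cases h2 : F (some i) = F none
    · simp [h2, h, sepCount]
    · simp [h2, hi]

/-- Double counting of the pairs `(α, β)` with a marked fixed point of `β`. -/
lemma count_mul_sepCount {V ι : Type*} [Fintype V] [DecidableEq V] (μ : Multiset ℕ)
    (f : V → Option ι) :
    μ.count 1 * sepCount μ f = ∑ j : V, Nat.card {p : Perm V × Perm V //
      ((∀ x y, p.1.SameCycle x y) ∧ genCycleType p.2 = μ ∧ Separates f (p.1 * p.2)) ∧
        p.2 j = j} := by
  classical
  rw [← Nat.card_sigma]
  let P : Perm V × Perm V → Prop := fun p =>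
    (∀ x y, p.1.SameCycle x y) ∧ genCycleType p.2 = μ ∧ Separates f (p.1 * p.2)
  have e : (Σ j : V, {p : Perm V × Perm V // P p ∧ p.2 j = j}) ≃
      Σ p : {p // P p}, {j // p.1.2 j = j} :=
    { toFun := fun s => ⟨⟨s.2.1, s.2.2.1⟩, ⟨s.1, s.2.2.2⟩⟩
      invFun := fun s => ⟨s.2.1, ⟨s.1.1, s.1.2, s.2.2⟩⟩
      left_inv := fun _ => rfl
      right_inv := fun _ => rfl }
  refine Eq.trans ?_ (Nat.card_congr e).symm
  rw [Nat.card_sigma]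
  have : ∀ p : {p // P p}, Nat.card {j // p.1.2 j = j} = μ.count 1 := fun p => by
    rw [card_fixed_eq_count, p.2.2.1]
  simp only [this, Finset.sum_const, smul_eq_mul, Finset.card_univ]
  rw [mul_comm, sepCount, Nat.card_eq_fintype_card]

lemma card_pairs_fix {V W ι : Type*} [Fintype V] [DecidableEq V] [Fintype W] [DecidableEq W]
    (e : V ≃ W) (μ : Multiset ℕ) (f : W → Option ι) (v : V) :
    Nat.card {p : Perm W × Perm W // ((∀ x y, p.1.SameCycle x y) ∧
      genCycleType p.2 = μ ∧ Separates f (p.1 * p.2)) ∧ p.2 (e v) = e v} =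
    Nat.card {p : Perm V × Perm V // ((∀ x y, p.1.SameCycle x y) ∧
      genCycleType p.2 = μ ∧ Separates (f ∘ e) (p.1 * p.2)) ∧ p.2 v = v} :=
  (Nat.card_congr ((e.permCongr.prodCongr e.permCongr).subtypeEquiv fun p =>
    and_congr (pair_condition_permCongr e μ f p).symm (by simp))).symm

/-! ### The colouring given by a composition -/

/-- The index of the block of the composition `L` containing `x`, if there is one. -/
def blockLabel : List ℕ → ℕ → Option ℕ
  | [], _ => none
  | a :: l, x => if x < a then some 0 else (blockLabel l (x - a)).map Nat.succ

lemma blockLabel_eq_some_iff (L : List ℕ) (x p : ℕ) :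
    blockLabel L x = some p ↔ p < L.length ∧ inBlock L p x := by
  induction L generalizing x p with
  | nil => simp [blockLabel]
  | cons a l ih =>
    cases p with
    | zero =>
      by_cases h : x < a <;> simp [blockLabel, inBlock, h]
    | succ p =>
      by_cases h : x < a
      · simp [blockLabel, inBlock, h]; omega
      · simp [blockLabel, inBlock, h, ih]; omega

lemma blockLabel_eq_none_iff (L : List ℕ) (x : ℕ) : blockLabel L x = none ↔ L.sum ≤ x := by
  induction L generalizing x with
  | nil => simp [blockLabel]
  | cons a l ih =>
    by_cases h : x < a
    · simp [blockLabel, h]; omega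
    · simp [blockLabel, h, ih]; omega

lemma isStronglySeparated_iff (L : List ℕ) {n : ℕ} (σ : Perm (Fin n)) :
    IsStronglySeparated L σ ↔ Separates (fun x : Fin n => blockLabel L x) σ := by
  have key : ∀ (x y : Fin n) c d, blockLabel L x = some c → blockLabel L y = some d →
      (sameBlock L x y ↔ c = d) := by
    intro x y c d hx hy
    simp only [sameBlock, ← and_assoc]
    constructor
    · rintro ⟨p, ⟨hp, h1⟩, h2⟩
      have h1' := (blockLabel_eq_some_iff L x p).2 ⟨hp, h1⟩
      have h2' := (blockLabel_eq_some_iff L y p).2 ⟨hp, h2⟩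
      simp_all
    · rintro rfl
      have h1' := (blockLabel_eq_some_iff L x c).1 hx
      have h2' := (blockLabel_eq_some_iff L y c).1 hy
      exact ⟨c, h1', h2'.2⟩
  have hlt : ∀ x : Fin n, (x : ℕ) < L.sum ↔ blockLabel L x ≠ none := by
    intro x
    rw [Ne, blockLabel_eq_none_iff]; omega
  constructor
  · intro h x y c d hx hy
    rw [← key x y c d hx hy]
    exact h x y ((hlt x).2 (by simp [hx])) ((hlt y).2 (by simp [hy]))
  · intro h x y hx hy
    obtain ⟨c, hc⟩ := Option.ne_none_iff_exists'.1 ((hlt x).1 hx)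
    obtain ⟨d, hd⟩ := Option.ne_none_iff_exists'.1 ((hlt y).1 hy)
    rw [key x y c d hc hd]
    exact h x y c d hc hd

lemma card_filter_fin_interval (n A B : ℕ) (hB : B ≤ n) :
    (Finset.univ.filter fun x : Fin n => A ≤ (x : ℕ) ∧ (x : ℕ) < B).card = B - A := by
  rw [← Finset.card_map Fin.valEmbedding, ← Nat.card_Ico]
  congr 1
  ext x
  simp only [Finset.mem_map, Finset.mem_filter, Finset.mem_univ, true_and,
    Fin.valEmbedding_apply, Finset.mem_Ico]
  constructor
  · rintro ⟨y, hy, rfl⟩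
    exact hy
  · intro h
    exact ⟨⟨x, by omega⟩, h, rfl⟩

lemma fiberCard_blockLabel_none (L : List ℕ) (n : ℕ) :
    fiberCard (fun x : Fin n => blockLabel L x) none = n - L.sum := by
  rw [← card_filter_fin_interval n L.sum n le_rfl]
  simp [fiberCard, blockLabel_eq_none_iff]

lemma fiberCard_blockLabel_some (L : List ℕ) (n : ℕ) (hn : L.sum ≤ n) (p : ℕ) :
    fiberCard (fun x : Fin n => blockLabel L x) (some p) = L.getD p 0 := by
  simp only [fiberCard, blockLabel_eq_some_iff, inBlock]
  by_cases hp : p < L.length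
  · have h1 : (L.take (p + 1)).sum ≤ L.sum := by
      conv_rhs => rw [← List.take_append_drop (p + 1) L, List.sum_append]
      omega
    have h2 := card_filter_fin_interval n (L.take p).sum (L.take (p + 1)).sum (h1.trans hn)
    simp only [hp, true_and, h2]
    rw [List.sum_take_succ _ _ hp]
    simp [hp]
  · simp [hp]

/-- `sepCount` for the block colouring of `Fin n` given by `L`. -/
noncomputable def blockCount (n : ℕ) (μ : Multiset ℕ) (L : List ℕ) : ℕ :=
  sepCount μ (fun x : Fin n => blockLabel L x)

/-- The denominator of `sepProb` is the count for the empty composition, which imposes no separation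
condition. -/
lemma sepProb_eq (n a : ℕ) (hn : 2 ≤ n) (L : List ℕ) :
    sepProb n a L = (blockCount n ((n - a) ::ₘ Multiset.replicate a 1) L : ℚ) /
      (blockCount n ((n - a) ::ₘ Multiset.replicate a 1) [] : ℚ) := by
  simp only [sepProb, blockCount, sepCount, fullCycleType_eq_singleton_iff hn,
    isStronglySeparated_iff]
  simp only [fullCycleType_eq_genCycleType]
  simp [Separates, blockLabel]

/-- A sum over points of a function of the block label, grouped by label. -/
lemma sum_blockLabel (L : List ℕ) (n : ℕ) (hn : L.sum ≤ n) (g : Option ℕ → ℕ) :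
    ∑ j : Fin n, g (blockLabel L j) =
      (n - L.sum) * g none + ∑ h : Fin L.length, L.get h * g (some h) := by
  have hmaps : ∀ j ∈ (Finset.univ : Finset (Fin n)), blockLabel L j ∈
      Finset.insertNone (Finset.range L.length) := by
    intro j _
    rw [Finset.mem_insertNone]
    intro p hp
    exact Finset.mem_range.2 ((blockLabel_eq_some_iff L j p).1 hp).1
  have hf : ∀ c, ∑ j ∈ Finset.univ.filter (fun j : Fin n => blockLabel L j = c), g (blockLabel L j) =
      fiberCard (fun x : Fin n => blockLabel L x) c * g c := by
    intro c
    rw [fiberCard, ← smul_eq_mul, ← Finset.sum_const]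
    refine Finset.sum_congr rfl fun j hj => ?_
    rw [(Finset.mem_filter.1 hj).2]
  rw [← Finset.sum_fiberwise_of_maps_to hmaps, Finset.sum_congr rfl fun c _ => hf c,
    Finset.sum_insertNone, fiberCard_blockLabel_none, Finset.sum_range]
  simp only [fiberCard_blockLabel_some L n hn]
  simp

/-- The recurrence at the level of counts. A marked fixed point `j` of `β` is removed: either `j`
is uncoloured, or it belongs to a block of `L`. -/
lemma blockCount_succ (n : ℕ) (μ : Multiset ℕ) (L : List ℕ) (hn : 1 ≤ n) (hm : L.sum ≤ n) :
    (1 ::ₘ μ).count 1 * blockCount (n + 1) (1 ::ₘ μ) L =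
      (n + 1 - L.sum) * (n * blockCount n μ L) +
      ∑ h : Fin L.length, L.get h * ((n + 1 - L.sum) * blockCount n μ L +
        (L.get h - 1) * blockCount n μ (L.set h (L.get h - 1))) := by
  have : NeZero n := ⟨by omega⟩
  let g : Option ℕ → ℕ := fun c => c.elim (n * blockCount n μ L) fun h =>
    (n + 1 - L.sum) * blockCount n μ L +
      (L.getD h 0 - 1) * blockCount n μ (L.set h (L.getD h 0 - 1))
  have hg := sum_blockLabel L (n + 1) (by omega) g
  simp only [g, Option.elim_none, Option.elim_some] at hg
  rw [blockCount, count_mul_sepCount]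
  have hget : ∀ h : Fin L.length, L.getD h 0 = L.get h := by simp
  simp only [hget] at hg
  rw [← hg]
  refine Finset.sum_congr rfl fun j _ => ?_
  set f : Fin (n + 1) → Option ℕ := fun x => blockLabel L x with hf
  let e := (finSuccEquiv' j).symm
  have he : e none = j := finSuccEquiv'_symm_none j
  set F := f ∘ e with hF
  have hFn : F none = blockLabel L j := by simp [hF, hf, he]
  have hcard := card_pairs_fix e (1 ::ₘ μ) f none
  rw [he] at hcard
  rw [hcard, ← hF]
  have hfibF : ∀ c, fiberCard F c = fiberCard f c := fun c =>
    Finset.card_equiv e (by simp [hF])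
  have hfn : fiberCard f none = n + 1 - L.sum := fiberCard_blockLabel_none L (n + 1)
  have hfs : ∀ p, fiberCard f (some p) = L.getD p 0 :=
    fiberCard_blockLabel_some L (n + 1) (by omega)
  cases hj : blockLabel L j with
  | none =>
    rw [card_pairs_fix_none_of_none μ F (hFn.trans hj), Fintype.card_fin]
    simp only [Option.elim_none]
    congr 1
    refine sepCount_eq_of_fiberCard _ _ _ fun c => ?_
    have h1 := fiberCard_option F c
    rw [hfibF, hFn, hj] at h1
    cases c with
    | none =>
      rw [hfn] at h1
      rw [fiberCard_blockLabel_none]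
      simp at h1; omega
    | some p =>
      rw [hfs] at h1
      rw [fiberCard_blockLabel_some L n hm]
      simpa using h1.symm
  | some h =>
    have hlen := ((blockLabel_eq_some_iff L j h).1 hj).1
    have hFn' : F none = some h := hFn.trans hj
    rw [card_pairs_fix_none_of_some μ F (by simp [hFn']) (blockCount n μ L), hfibF, hfn, hfibF,
      hFn', hfs]
    · simp only [Option.elim_some]
      congr 2
      refine sepCount_eq_of_fiberCard _ _ _ fun c => ?_
      have h1 := fiberCard_option F c
      have h2 := fiberCard_option F (some h)
      rw [hfibF, hFn', hfs] at h2
      simp only [if_true] at h2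
      rw [hfibF, hFn'] at h1
      have hsum : (L.set h (L.getD h 0 - 1)).sum + 1 = L.sum := by
        have h3 := List.sum_set L h (L.getD h 0 - 1)
        have h4 := List.sum_set L h L[h]
        rw [List.set_getElem_self] at h4
        have h5 : L.getD h 0 = L[h] := by simp [hlen]
        rw [if_pos hlen] at h3 h4
        omega
      cases c with
      | none =>
        rw [hfn] at h1
        rw [fiberCard_blockLabel_none]
        simp at h1; omega
      | some p =>
        rw [hfs] at h1
        rw [fiberCard_blockLabel_some _ n (by omega)]
        by_cases hp : p = h
        · subst hp
          simp only [if_true] at h1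
          rw [h1]
          simp [hlen]
        · simp [hp] at h1
          simp [Ne.symm hp, h1]
    · intro i hi
      refine sepCount_eq_of_fiberCard _ _ _ fun c => ?_
      have h1 := fiberCard_update F i hi c
      rw [hfibF] at h1
      cases c with
      | none =>
        rw [hfn] at h1
        rw [fiberCard_blockLabel_none]
        simp at h1; omega
      | some p =>
        rw [hfs] at h1
        rw [fiberCard_blockLabel_some L n hm]
        simpa using h1.symm

/-- For a composition `I = (i_1,…,i_k)` of `m ≤ n`, `n ≥ 2` and `0 ≤ a < n`:
`n(n+1) P^I_{n+1,a+1} = (n-m+1)(n+m) P^I_{n,a} + Σ_h i_h(i_h-1) P^{I-δ_h}_{n,a}`. -/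
theorem stmt16 (n a m : ℕ) (L : List ℕ) (hL : ∀ x ∈ L, 0 < x) (hsum : L.sum = m)
    (hn : 2 ≤ n) (hm : m ≤ n) (ha : a < n) :
    (n : ℚ) * ((n : ℚ) + 1) * sepProb (n + 1) (a + 1) L
      = ((n : ℚ) - m + 1) * ((n : ℚ) + m) * sepProb n a L
        + ∑ h : Fin L.length,
            (L.get h : ℚ) * ((L.get h : ℚ) - 1) * sepProb n a (L.set h (L.get h - 1)) := by
  subst hsum
  set μ := (n - a) ::ₘ Multiset.replicate a 1 with hμ
  have hμ' : (n + 1 - (a + 1)) ::ₘ Multiset.replicate (a + 1) 1 = 1 ::ₘ μ := by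
    rw [hμ, Multiset.replicate_succ, Multiset.cons_swap, Nat.add_sub_add_right]
  have hN := blockCount_succ n μ L (by omega) hm
  have hD := blockCount_succ n μ [] (by omega) (by simp)
  simp only [sepProb_eq n a hn, sepProb_eq (n + 1) (a + 1) (by omega), hμ', ← hμ]
  have hc : 0 < (1 ::ₘ μ).count 1 := by simp
  generalize (1 ::ₘ μ).count 1 = c at hN hD hc
  have hN' := congrArg (Nat.cast : ℕ → ℚ) hN
  have hD' := congrArg (Nat.cast : ℕ → ℚ) hD
  have hcast : ((n + 1 - L.sum : ℕ) : ℚ) = n + 1 - (L.sum : ℚ) := by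
    rw [Nat.cast_sub (by omega)]; push_cast; ring
  have hpred : ∀ h : Fin L.length, ((L.get h - 1 : ℕ) : ℚ) = (L.get h : ℚ) - 1 := fun h => by
    rw [Nat.cast_sub (hL _ (List.get_mem L h))]; simp
  have hsumL : ∑ h : Fin L.length, (L.get h : ℚ) = (L.sum : ℚ) := by
    rw [← Nat.cast_sum]
    simp
  simp only [Nat.cast_mul, Nat.cast_add, Nat.cast_sum, hcast, hpred, mul_add,
    Finset.sum_add_distrib, ← Finset.sum_mul, hsumL] at hN'
  simp at hD'
  have hc' : (c : ℚ) ≠ 0 := by positivity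
  have hn' : (n : ℚ) ≠ 0 := by positivity
  have hn1 : (n : ℚ) + 1 ≠ 0 := by positivity
  -- multiply numerator and denominator of the left-hand probability by `c`
  rw [← mul_div_mul_left (blockCount (n + 1) (1 ::ₘ μ) L : ℚ) _ hc', hN', hD']
  by_cases hD0 : (blockCount n μ [] : ℚ) = 0
  -- if the denominator on `n` points vanishes, so does the one on `n + 1` points
  · simp [hD0]
  · simp only [mul_div_assoc', ← Finset.sum_div]
    field_simp
    ring
end
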